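/- Let H be a Hopf algebra over a field k with antipode S. Call a k-subspace V of H a subcoalgebra if Δ(V) is contained in the image of V ⊗ V in H ⊗ H, and call a subcoalgebra V simple if V ≠ 0 and the only subcoalgebras of H contained in V are 0 and V. If every simple subcoalgebra of H is contained in the range of S (equivalently, the image S(H) contains the coradical H₀ of H, the sum of all simple subcoalgebras), then S is surjective. -/

import Mathlib

open TensorProduct

variable (k : Type u) [Field k] (H : Type u) [Ring H] [HopfAlgebra k H]

/-- A `k`-subspace `V` of a Hopf algebra `H` is a subcoalgebra if `Δ(V)` is contained in the
image of `V ⊗ V` in `H ⊗ H`. -/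
def IsSubcoalgebra (V : Submodule k H) : Prop :=
  ∀ v ∈ V, Coalgebra.comul (R := k) v ∈
    LinearMap.range (TensorProduct.map V.subtype V.subtype)

/-- A subcoalgebra `V` is simple if it is nonzero and the only subcoalgebras of `H` contained
in it are `0` and `V`. -/
def IsSimpleSubcoalgebra (V : Submodule k H) : Prop :=
  IsSubcoalgebra k H V ∧ V ≠ ⊥ ∧
    ∀ W : Submodule k H, IsSubcoalgebra k H W → W ≤ V → W = ⊥ ∨ W = V

/-!
In the convolution algebra `End(H)` the identity `F` is invertible with inverse the antipode `S`.
Suppose `F` maps subcoalgebras `U` and `W` into `S(H)`, and choose `P, Q : H → S(H)` agreeing with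
the identity on `U` and on `W`. Then `(F - P) * S * (F - Q) = F - P - Q + P * S * Q` vanishes on the
wedge `U ∧ W`. As `S(H)` is closed under multiplication, `F` maps `U ∧ W` into `S(H)`.

Wedges build every finite-dimensional subcoalgebra `V` from simple ones. If `V ≠ 0` is in no wedge
of two proper subcoalgebras of `V`, then its dual algebra is a prime Artinian ring, hence has no
proper nonzero two-sided ideal, so `V` is simple. Finally, every element of `H` lies in a
finite-dimensional subcoalgebra.
-/

open WithConv
open Module (Dual)

section PrimeArtinian

variable {R : Type*} [Ring R]

theorem jacobson_eq_bot_of_forall_mul_eq_bot [IsArtinianRing R]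
    (hR : ∀ I J : Ideal R, I.IsTwoSided → J.IsTwoSided → I * J = ⊥ → I = ⊥ ∨ J = ⊥) :
    Ring.jacobson R = ⊥ := by
  obtain ⟨n, hn⟩ := IsSemiprimaryRing.isNilpotent (R := R)
  induction n with
  | zero =>
    rw [Submodule.pow_zero, Ideal.one_eq_top] at hn
    exact eq_bot_iff.2 (le_top.trans hn.le)
  | succ n ih =>
    rw [Submodule.pow_succ] at hn
    exact (hR _ _ inferInstance inferInstance hn).elim ih id

theorem eq_bot_or_eq_top_of_forall_mul_eq_bot [IsArtinianRing R]
    (hR : ∀ I J : Ideal R, I.IsTwoSided → J.IsTwoSided → I * J = ⊥ → I = ⊥ ∨ J = ⊥)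
    (I : Ideal R) [hI : I.IsTwoSided] : I = ⊥ ∨ I = ⊤ := by
  have : IsSemisimpleRing R :=
    IsArtinianRing.isSemisimpleRing_iff_jacobson.2 (jacobson_eq_bot_of_forall_mul_eq_bot hR)
  obtain ⟨L, hL⟩ := exists_isCompl I
  have hIL : I * (L * ⊤) = ⊥ := by
    rw [← mul_assoc, eq_bot_iff.2 (Ideal.mul_le_inf.trans hL.inf_eq_bot.le), Ideal.bot_mul]
  refine (hR I (L * ⊤) hI inferInstance hIL).imp_right fun hLtop => ?_
  have hLbot : L = ⊥ := eq_bot_iff.2 fun x hx => by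
    simpa [hLtop] using Ideal.mul_mem_mul hx (Submodule.mem_top (x := (1 : R)))
  simpa [hLbot] using hL.sup_eq_top

theorem eq_or_eq_top_of_forall_not_mul_le {I : Ideal R} [I.IsTwoSided] [IsArtinianRing (R ⧸ I)]
    (hI : ∀ J K : Ideal R, J.IsTwoSided → K.IsTwoSided → I < J → I < K → ¬ J * K ≤ I)
    {J : Ideal R} [J.IsTwoSided] (hIJ : I ≤ J) : J = I ∨ J = ⊤ := by
  let π := Ideal.Quotient.mk I
  have hπ : Function.Surjective π := Ideal.Quotient.mk_surjective
  have hker : Ideal.comap π ⊥ = I := Ideal.mk_ker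
  have lt_comap {L : Ideal (R ⧸ I)} (hL : L ≠ ⊥) : I < L.comap π := by
    refine lt_of_eq_of_lt hker.symm <| lt_of_le_of_ne (Ideal.comap_mono bot_le) ?_
    exact (Ideal.comap_injective_of_surjective π hπ).ne hL.symm
  have hprime (L M : Ideal (R ⧸ I)) (_ : L.IsTwoSided) (_ : M.IsTwoSided) (hLM : L * M = ⊥) :
      L = ⊥ ∨ M = ⊥ := by
    by_contra! hne
    refine hI _ _ inferInstance inferInstance (lt_comap hne.1) (lt_comap hne.2) ?_
    refine Ideal.mul_le.2 fun a ha b hb => Ideal.Quotient.eq_zero_iff_mem.1 ?_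
    have hab : π a * π b ∈ L * M := Ideal.mul_mem_mul ha hb
    rwa [hLM, ← map_mul] at hab
  have hcomap : (J.map π).comap π = J := by
    rw [Ideal.comap_map_of_surjective' π hπ, Ideal.mk_ker, sup_eq_left.2 hIJ]
  refine (eq_bot_or_eq_top_of_forall_mul_eq_bot hprime (J.map π)).imp (fun h => ?_) fun h => ?_
  · rw [← hcomap, h, hker]
  · rw [← hcomap, h, Ideal.comap_top]

end PrimeArtinian

section TensorProduct

theorem mul'_map_eq_apply_rid {R M N : Type*} [CommSemiring R] [AddCommMonoid M] [Module R M]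
    [AddCommMonoid N] [Module R N] (f : Dual R M) (g : Dual R N) (x : M ⊗[R] N) :
    LinearMap.mul' R R (map f g x) = f (TensorProduct.rid R M (g.lTensor M x)) := by
  induction x with
  | zero => simp
  | tmul m n => simp [mul_comm]
  | add y z hy hz => simp only [map_add, hy, hz]

theorem mul'_map_eq_apply_lid {R M N : Type*} [CommSemiring R] [AddCommMonoid M] [Module R M]
    [AddCommMonoid N] [Module R N] (f : Dual R M) (g : Dual R N) (x : M ⊗[R] N) :
    LinearMap.mul' R R (map f g x) = g (TensorProduct.lid R N (f.rTensor N x)) := by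
  induction x with
  | zero => simp
  | tmul m n => simp
  | add y z hy hz => simp only [map_add, hy, hz]

variable {K M N : Type*} [Field K] [AddCommGroup M] [Module K M] [AddCommGroup N] [Module K N]

theorem tensorProduct_eq_zero_of_forall_dual {x : M ⊗[K] N}
    (hx : ∀ (f : Dual K M) (g : Dual K N), LinearMap.mul' K K (map f g x) = 0) : x = 0 := by
  let b := Module.Basis.ofVectorSpace K M
  let c := Module.Basis.ofVectorSpace K N
  refine (b.tensorProduct c).ext_elem fun ⟨i, j⟩ => ?_
  have hcoord : (b.tensorProduct c).coord (i, j) =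
      LinearMap.mul' K K ∘ₗ map (b.coord i) (c.coord j) := by
    ext u v
    simp [mul_comm]
  simpa [hx] using LinearMap.congr_fun hcoord x

theorem mul'_map_eq_zero_of_mem_dualAnnihilator {Φ : Submodule K (Dual K M)}
    {Ψ : Submodule K (Dual K N)} {x : M ⊗[K] N}
    (hx : ∀ f ∈ Φ, ∀ g ∈ Ψ, LinearMap.mul' K K (map f g x) = 0)
    {f : Dual K M} (hf : f ∈ Φ.dualCoannihilator.dualAnnihilator)
    {g : Dual K N} (hg : g ∈ Ψ.dualCoannihilator.dualAnnihilator) :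
    LinearMap.mul' K K (map f g x) = 0 := by
  rw [Submodule.mem_dualAnnihilator] at hf hg
  rw [mul'_map_eq_apply_lid]
  refine hg _ ((Submodule.mem_dualCoannihilator _).2 fun g' hg' => ?_)
  rw [← mul'_map_eq_apply_lid, mul'_map_eq_apply_rid]
  refine hf _ ((Submodule.mem_dualCoannihilator _).2 fun f' hf' => ?_)
  rw [← mul'_map_eq_apply_rid]
  exact hx f' hf' g' hg'

theorem map_mkQ_dualCoannihilator_eq_zero {Φ : Submodule K (Dual K M)}
    {Ψ : Submodule K (Dual K N)} {x : M ⊗[K] N}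
    (hx : ∀ f ∈ Φ, ∀ g ∈ Ψ, LinearMap.mul' K K (map f g x) = 0) :
    map Φ.dualCoannihilator.mkQ Ψ.dualCoannihilator.mkQ x = 0 := by
  refine tensorProduct_eq_zero_of_forall_dual fun f g => ?_
  rw [← LinearMap.comp_apply (map f g), ← map_comp]
  apply mul'_map_eq_zero_of_mem_dualAnnihilator hx <;>
    exact (Submodule.mem_dualAnnihilator _).2 fun w hw => by
      simp [(Submodule.Quotient.mk_eq_zero _).2 hw]

theorem mem_range_mapIncl_dualCoannihilator {Φ : Submodule K (Dual K M)}
    {Ψ : Submodule K (Dual K N)} {x : M ⊗[K] N}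
    (hΦ : ∀ f ∈ Φ, ∀ g, LinearMap.mul' K K (map f g x) = 0)
    (hΨ : ∀ f, ∀ g ∈ Ψ, LinearMap.mul' K K (map f g x) = 0) :
    x ∈ LinearMap.range (mapIncl Φ.dualCoannihilator Ψ.dualCoannihilator) := by
  let V := Φ.dualCoannihilator
  let W := Ψ.dualCoannihilator
  obtain ⟨p, hp⟩ := V.subtype.exists_leftInverse_of_injective V.ker_subtype
  obtain ⟨q, hq⟩ := W.subtype.exists_leftInverse_of_injective W.ker_subtype
  refine ⟨map p q x, (sub_eq_zero.1 <| tensorProduct_eq_zero_of_forall_dual fun f g => ?_).symm⟩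
  let f' : Dual K M := f ∘ₗ V.subtype ∘ₗ p
  let g' : Dual K N := g ∘ₗ W.subtype ∘ₗ q
  have hf : f - f' ∈ V.dualAnnihilator := (Submodule.mem_dualAnnihilator _).2 fun v hv => by
    simpa [f', sub_eq_zero] using congrArg (f ∘ V.subtype) (LinearMap.congr_fun hp ⟨v, hv⟩).symm
  have hg : g - g' ∈ W.dualAnnihilator := (Submodule.mem_dualAnnihilator _).2 fun w hw => by
    simpa [g', sub_eq_zero] using congrArg (g ∘ W.subtype) (LinearMap.congr_fun hq ⟨w, hw⟩).symm
  have hleft : LinearMap.mul' K K (map (f - f') g x) = 0 :=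
    mul'_map_eq_zero_of_mem_dualAnnihilator (Ψ := ⊤) (fun f hf g _ => hΦ f hf g) hf
      (Submodule.le_dualCoannihilator_dualAnnihilator _ trivial)
  have hright : LinearMap.mul' K K (map f' (g - g') x) = 0 :=
    mul'_map_eq_zero_of_mem_dualAnnihilator (Φ := ⊤) (fun f _ g hg => hΨ f g hg)
      (Submodule.le_dualCoannihilator_dualAnnihilator _ trivial) hg
  have hsplit : map f g - map f' g' = map (f - f') g + map f' (g - g') := by
    ext m n
    simp [sub_tmul, tmul_sub]
  have hmap : map f g (map V.subtype W.subtype (map p q x)) = map f' g' x := by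
    simp only [f', g', map_comp, LinearMap.comp_apply]
  rw [mapIncl, map_sub, hmap, ← LinearMap.sub_apply, hsplit, LinearMap.add_apply, map_add, hleft,
    hright, add_zero]

end TensorProduct

theorem exists_range_le_and_le_ker_sub {K M N : Type*} [DivisionRing K] [AddCommGroup M]
    [Module K M] [AddCommGroup N] [Module K N] {V : Submodule K M} {B : Submodule K N}
    {f : M →ₗ[K] N} (hV : V ≤ B.comap f) :
    ∃ g : M →ₗ[K] N, LinearMap.range g ≤ B ∧ V ≤ LinearMap.ker (f - g) := by
  obtain ⟨g, hg⟩ := (f.restrict hV).exists_extend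
  refine ⟨B.subtype ∘ₗ g, ?_, fun v hv => ?_⟩
  · rintro _ ⟨x, rfl⟩
    exact (g x).2
  · have hgv : (g v : N) = f v := congrArg Subtype.val (LinearMap.congr_fun hg ⟨v, hv⟩)
    simp [hgv]

section Coalgebra

variable {K C : Type*} [Field K] [AddCommGroup C] [Module K C] [Coalgebra K C]
variable {A : Type*} [Ring A] [Algebra K A]

variable (K C) in
/-- The dual algebra of a coalgebra: its linear functionals under convolution. -/
abbrev DualAlgebra := WithConv (C →ₗ[K] K)

/-- Subcoalgebras of an arbitrary coalgebra, as a predicate on subspaces; over a Hopf algebra this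
unfolds to `IsSubcoalgebra`. -/
def IsComulClosed (V : Submodule K C) : Prop :=
  ∀ v ∈ V, Coalgebra.comul (R := K) v ∈ LinearMap.range (mapIncl V V)

/-- The wedge `U ∧ W` of two subspaces of a coalgebra, which Sweedler defines as the preimage of
`U ⊗ C + C ⊗ W` under `Δ`. -/
noncomputable def wedge (U W : Submodule K C) : Submodule K C :=
  LinearMap.ker (map U.mkQ W.mkQ ∘ₗ Coalgebra.comul)

theorem convMul_apply_eq_zero_of_mem_wedge {U W : Submodule K C} {f g : WithConv (C →ₗ[K] A)}
    (hf : U ≤ LinearMap.ker f.ofConv) (hg : W ≤ LinearMap.ker g.ofConv) {x : C}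
    (hx : x ∈ wedge U W) : (f * g) x = 0 := by
  have hx' : map U.mkQ W.mkQ (Coalgebra.comul x) = 0 := hx
  rw [LinearMap.convMul_apply, ← U.liftQ_mkQ f.ofConv hf, ← W.liftQ_mkQ g.ofConv hg, map_comp,
    LinearMap.comp_apply, hx', map_zero, map_zero]

theorem convMul_apply_mem_mul {B B' : Submodule K A} {f g : WithConv (C →ₗ[K] A)}
    (hf : LinearMap.range f.ofConv ≤ B) (hg : LinearMap.range g.ofConv ≤ B') (x : C) :
    (f * g) x ∈ B * B' := by
  rw [(Coalgebra.Repr.arbitrary K x).convMul_apply]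
  exact Submodule.sum_mem _ fun i _ => Submodule.mul_mem_mul (hf ⟨_, rfl⟩) (hg ⟨_, rfl⟩)

namespace IsComulClosed

variable {V : Submodule K C}

theorem le_ker_convMul_left (hV : IsComulClosed V) {f : WithConv (C →ₗ[K] A)}
    (hf : V ≤ LinearMap.ker f.ofConv) (g : WithConv (C →ₗ[K] A)) :
    V ≤ LinearMap.ker (f * g).ofConv := by
  intro v hv
  obtain ⟨y, hy⟩ := hV v hv
  have hfV : f.ofConv ∘ₗ V.subtype = 0 := LinearMap.ext fun w => hf w.2
  rw [LinearMap.mem_ker, LinearMap.convMul_apply, ← hy, mapIncl, ← LinearMap.comp_apply (map _ _),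
    ← map_comp, hfV, map_zero_left, LinearMap.zero_apply, map_zero]

theorem le_ker_convMul_right (hV : IsComulClosed V) (f : WithConv (C →ₗ[K] A))
    {g : WithConv (C →ₗ[K] A)} (hg : V ≤ LinearMap.ker g.ofConv) :
    V ≤ LinearMap.ker (f * g).ofConv := by
  intro v hv
  obtain ⟨y, hy⟩ := hV v hv
  have hgV : g.ofConv ∘ₗ V.subtype = 0 := LinearMap.ext fun w => hg w.2
  rw [LinearMap.mem_ker, LinearMap.convMul_apply, ← hy, mapIncl, ← LinearMap.comp_apply (map _ _),
    ← map_comp, hgV, map_zero_right, LinearMap.zero_apply, map_zero]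

/-- The ideal `V^⊥` of functionals vanishing on a subcoalgebra `V`. -/
noncomputable def annihilator (hV : IsComulClosed V) : Ideal (DualAlgebra K C) where
  carrier := {f | V ≤ LinearMap.ker f.ofConv}
  add_mem' hf hg v hv := by simp [LinearMap.mem_ker.1 (hf hv), LinearMap.mem_ker.1 (hg hv)]
  zero_mem' _ _ := rfl
  smul_mem' f _ hg := hV.le_ker_convMul_right f hg

theorem mem_annihilator {hV : IsComulClosed V} {f : DualAlgebra K C} :
    f ∈ hV.annihilator ↔ V ≤ LinearMap.ker f.ofConv :=
  Iff.rfl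

instance (hV : IsComulClosed V) : hV.annihilator.IsTwoSided :=
  ⟨fun g hf => hV.le_ker_convMul_left hf g⟩

theorem finite_quotient_annihilator [FiniteDimensional K V] (hV : IsComulClosed V) :
    Module.Finite K (DualAlgebra K C ⧸ hV.annihilator) := by
  obtain ⟨p, hp⟩ := V.subtype.exists_leftInverse_of_injective V.ker_subtype
  let extend : Dual K V →ₗ[K] DualAlgebra K C ⧸ hV.annihilator :=
    (Ideal.Quotient.mkₐ K hV.annihilator).toLinearMap ∘ₗ
      (WithConv.linearEquiv K (C →ₗ[K] K)).symm.toLinearMap ∘ₗ p.dualMap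
  refine Module.Finite.of_surjective extend fun y => ?_
  obtain ⟨f, rfl⟩ := Ideal.Quotient.mk_surjective y
  refine ⟨f.ofConv ∘ₗ V.subtype, Ideal.Quotient.eq.2 <| mem_annihilator.2 fun v hv => ?_⟩
  have hpv : p v = ⟨v, hv⟩ := LinearMap.congr_fun hp ⟨v, hv⟩
  simp [hpv]

end IsComulClosed

namespace DualAlgebra

/-- The subspace `I^⊥` of common zeros of an ideal `I` of the dual algebra. -/
noncomputable def coannihilator (I : Ideal (DualAlgebra K C)) : Submodule K C :=
  ((I.restrictScalars K).map (WithConv.linearEquiv K (C →ₗ[K] K)).toLinearMap).dualCoannihilator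

theorem mem_coannihilator {I : Ideal (DualAlgebra K C)} {x : C} :
    x ∈ coannihilator I ↔ ∀ f ∈ I, f x = 0 :=
  (Submodule.mem_dualCoannihilator _).trans Set.forall_mem_image

theorem isComulClosed_coannihilator (I : Ideal (DualAlgebra K C)) [I.IsTwoSided] :
    IsComulClosed (coannihilator I) := by
  refine fun x hx => mem_range_mapIncl_dualCoannihilator ?_ ?_
  · rintro _ ⟨f, hf, rfl⟩ g
    exact mem_coannihilator.1 hx _ (I.mul_mem_right (toConv g) hf)
  · rintro f _ ⟨g, hg, rfl⟩
    exact mem_coannihilator.1 hx _ (I.mul_mem_left (toConv f) hg)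

theorem coannihilator_mul_le_wedge (I J : Ideal (DualAlgebra K C)) :
    coannihilator (I * J) ≤ wedge (coannihilator I) (coannihilator J) := by
  intro x hx
  refine map_mkQ_dualCoannihilator_eq_zero ?_
  rintro _ ⟨f, hf, rfl⟩ _ ⟨g, hg, rfl⟩
  exact mem_coannihilator.1 hx _ (Ideal.mul_mem_mul hf hg)

theorem coannihilator_anti {I J : Ideal (DualAlgebra K C)} (h : I ≤ J) :
    coannihilator J ≤ coannihilator I :=
  fun _ hx => mem_coannihilator.2 fun f hf => mem_coannihilator.1 hx f (h hf)

theorem coannihilator_le_of_forall_mem {I : Ideal (DualAlgebra K C)} {W : Submodule K C}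
    (hW : ∀ f : DualAlgebra K C, W ≤ LinearMap.ker f.ofConv → f ∈ I) : coannihilator I ≤ W := by
  intro x hx
  by_contra hxW
  obtain ⟨f, hfx, hfW⟩ := Submodule.exists_le_ker_of_notMem hxW
  exact hfx (mem_coannihilator.1 hx (toConv f) (hW _ hfW))

end DualAlgebra

open DualAlgebra

theorem IsComulClosed.coannihilator_annihilator {V : Submodule K C} (hV : IsComulClosed V) :
    coannihilator hV.annihilator = V :=
  le_antisymm (coannihilator_le_of_forall_mem fun _ hf => hf)
    fun _ hv => mem_coannihilator.2 fun _ hf => hf hv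

/-- The largest two-sided ideal of functionals vanishing at `x`, the annihilator of the subcoalgebra
generated by `x`. -/
noncomputable def DualAlgebra.generatedAnnihilator (x : C) : Ideal (DualAlgebra K C) where
  carrier := {f | ∀ g g' : DualAlgebra K C, (g * f * g') x = 0}
  add_mem' ha hb g g' := by simp [mul_add, add_mul, -LinearMap.convMul_apply, ha g g', hb g g']
  zero_mem' g g' := by simp [-LinearMap.convMul_apply]
  smul_mem' c f hf g g' := by simpa only [smul_eq_mul, ← mul_assoc] using hf (g * c) g'

instance (x : C) : (generatedAnnihilator (K := K) x).IsTwoSided :=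
  ⟨fun c hf g g' => by simpa only [mul_assoc] using hf g (c * g')⟩

theorem exists_finiteDimensional_mem_generatedAnnihilator (x : C) :
    ∃ W : Submodule K C, FiniteDimensional K W ∧
      ∀ f : DualAlgebra K C, W ≤ LinearMap.ker f.ofConv → f ∈ generatedAnnihilator (K := K) x := by
  classical
  let r := Coalgebra.Repr.arbitrary K x
  let s := fun i => Coalgebra.Repr.arbitrary K (r.left i)
  let T := r.index.biUnion fun i => (s i).index.image (s i).right
  refine ⟨Submodule.span K T, FiniteDimensional.span_finset K T, fun f hf g g' => ?_⟩
  rw [r.convMul_apply]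
  refine Finset.sum_eq_zero fun i hi => ?_
  rw [(s i).convMul_apply, Finset.sum_eq_zero, zero_mul]
  intro j hj
  have hmem : (s i).right j ∈ Submodule.span K (T : Set C) := Submodule.subset_span <|
    Finset.mem_biUnion.2 ⟨i, hi, Finset.mem_image_of_mem _ hj⟩
  rw [LinearMap.mem_ker.1 (hf hmem), mul_zero]

theorem exists_finiteDimensional_isComulClosed (x : C) :
    ∃ V : Submodule K C, x ∈ V ∧ FiniteDimensional K V ∧ IsComulClosed V := by
  obtain ⟨W, _, hW⟩ := exists_finiteDimensional_mem_generatedAnnihilator (K := K) x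
  refine ⟨coannihilator (generatedAnnihilator (K := K) x), mem_coannihilator.2 fun f hf => ?_,
    Submodule.finiteDimensional_of_le (coannihilator_le_of_forall_mem hW),
    isComulClosed_coannihilator _⟩
  simpa only [one_mul, mul_one] using hf 1 1

theorem IsComulClosed.coannihilator_lt {V : Submodule K C} (hV : IsComulClosed V)
    {J : Ideal (DualAlgebra K C)} (hJ : hV.annihilator < J) : coannihilator J < V := by
  refine lt_of_le_of_ne ((coannihilator_anti hJ.le).trans hV.coannihilator_annihilator.le) ?_
  rintro rfl
  exact hJ.not_ge fun f hf v hv => mem_coannihilator.1 hv f hf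

theorem IsComulClosed.minimal_or_exists_le_wedge {V : Submodule K C} [FiniteDimensional K V]
    (hV : IsComulClosed V) (hV₀ : V ≠ ⊥) :
    Minimal (fun W => IsComulClosed W ∧ W ≠ ⊥) V ∨
      ∃ U W, IsComulClosed U ∧ IsComulClosed W ∧ U < V ∧ W < V ∧ V ≤ wedge U W := by
  refine or_iff_not_imp_right.2 fun hwedge => ⟨⟨hV, hV₀⟩, fun W ⟨hW, hW₀⟩ hWV => ?_⟩
  have := hV.finite_quotient_annihilator
  have : IsArtinianRing (DualAlgebra K C ⧸ hV.annihilator) := IsArtinianRing.of_finite K _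
  have hprime (I J : Ideal (DualAlgebra K C)) (_ : I.IsTwoSided) (_ : J.IsTwoSided)
      (hI : hV.annihilator < I) (hJ : hV.annihilator < J) : ¬ I * J ≤ hV.annihilator := fun hIJ =>
    hwedge ⟨_, _, isComulClosed_coannihilator I, isComulClosed_coannihilator J,
      hV.coannihilator_lt hI, hV.coannihilator_lt hJ, hV.coannihilator_annihilator.ge.trans <|
        (coannihilator_anti hIJ).trans (coannihilator_mul_le_wedge I J)⟩
  have hVW : hV.annihilator ≤ hW.annihilator := fun f hf => hWV.trans hf
  rcases eq_or_eq_top_of_forall_not_mul_le hprime hVW with h | h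
  · rw [← hV.coannihilator_annihilator, ← h, hW.coannihilator_annihilator]
  · refine absurd (eq_bot_iff.2 ?_) hW₀
    rw [← hW.coannihilator_annihilator]
    exact coannihilator_le_of_forall_mem fun f _ => h ▸ Submodule.mem_top

theorem IsComulClosed.le_of_minimal_le_of_wedge_le {D : Submodule K C}
    (hmin : ∀ V, Minimal (fun W => IsComulClosed W ∧ W ≠ ⊥) V → V ≤ D)
    (hwedge : ∀ U W, IsComulClosed U → IsComulClosed W → U ≤ D → W ≤ D → wedge U W ≤ D)
    {V : Submodule K C} [FiniteDimensional K V] (hV : IsComulClosed V) : V ≤ D := by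
  induction hn : Module.finrank K V using Nat.strong_induction_on generalizing V with
  | _ n ih =>
  have le_of_lt {U : Submodule K C} (hU : IsComulClosed U) (hUV : U < V) : U ≤ D :=
    have := Submodule.finiteDimensional_of_le hUV.le
    ih _ (hn ▸ Submodule.finrank_lt_finrank_of_lt hUV) hU rfl
  rcases eq_or_ne V ⊥ with rfl | hV₀
  · exact bot_le
  rcases hV.minimal_or_exists_le_wedge hV₀ with h | ⟨U, W, hU, hW, hUV, hWV, hle⟩
  · exact hmin V h
  · exact hle.trans (hwedge U W hU hW (le_of_lt hU hUV) (le_of_lt hW hWV))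

theorem eq_top_of_minimal_le_of_wedge_le {D : Submodule K C}
    (hmin : ∀ V, Minimal (fun W => IsComulClosed W ∧ W ≠ ⊥) V → V ≤ D)
    (hwedge : ∀ U W, IsComulClosed U → IsComulClosed W → U ≤ D → W ≤ D → wedge U W ≤ D) :
    D = ⊤ := by
  refine eq_top_iff.2 fun x _ => ?_
  obtain ⟨V, hxV, _, hV⟩ := exists_finiteDimensional_isComulClosed (K := K) x
  exact hV.le_of_minimal_le_of_wedge_le hmin hwedge hxV

theorem IsComulClosed.wedge_le_comap_unit {U W : Submodule K C} (hU : IsComulClosed U)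
    {B : Submodule K A} (hB : B * B ≤ B) (F : (WithConv (C →ₗ[K] A))ˣ)
    (hinv : LinearMap.range F⁻¹.val.ofConv ≤ B)
    (hUB : U ≤ B.comap F.val.ofConv) (hWB : W ≤ B.comap F.val.ofConv) :
    wedge U W ≤ B.comap F.val.ofConv := by
  obtain ⟨p, hPB, hFP⟩ := exists_range_le_and_le_ker_sub hUB
  obtain ⟨q, hQB, hFQ⟩ := exists_range_le_and_le_ker_sub hWB
  let P : WithConv (C →ₗ[K] A) := toConv p
  let Q : WithConv (C →ₗ[K] A) := toConv q
  have hexpand : (F.val - P) * F⁻¹.val * (F.val - Q) = F.val - (P + Q - P * F⁻¹.val * Q) := by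
    simp only [sub_mul, mul_sub, Units.mul_inv, one_mul, mul_assoc, Units.inv_mul, mul_one]
    abel
  intro x hx
  have hFx : F.val x = P x + Q x - (P * F⁻¹.val * Q) x := by
    have hzero := convMul_apply_eq_zero_of_mem_wedge
      (hU.le_ker_convMul_left (f := F.val - P) hFP F⁻¹.val) (g := F.val - Q) hFQ hx
    rw [hexpand] at hzero
    exact sub_eq_zero.1 hzero
  have hPFB : LinearMap.range (P * F⁻¹.val).ofConv ≤ B := by
    rintro _ ⟨c, rfl⟩
    exact hB (convMul_apply_mem_mul hPB hinv c)
  rw [Submodule.mem_comap, hFx]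
  exact B.sub_mem (B.add_mem (hPB ⟨x, rfl⟩) (hQB ⟨x, rfl⟩))
    (hB (convMul_apply_mem_mul hPFB hQB x))

/-- For `C = A` a Hopf algebra and `F` the identity, `F⁻¹` is the antipode, and `B` is to be its
range. -/
theorem antipode_surjective_of_coradical_le_range_general {B : Submodule K A} (hB : B * B ≤ B)
    (F : (WithConv (C →ₗ[K] A))ˣ) (hinv : LinearMap.range F⁻¹.val.ofConv ≤ B)
    (hF : ∀ V, Minimal (fun W => IsComulClosed W ∧ W ≠ ⊥) V → V ≤ B.comap F.val.ofConv) :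
    LinearMap.range F.val.ofConv ≤ B := by
  rw [LinearMap.range_le_iff_comap]
  exact eq_top_of_minimal_le_of_wedge_le hF fun _ _ hU _ =>
    hU.wedge_le_comap_unit hB F hinv

end Coalgebra

section HopfAlgebra

variable (K A : Type*) [CommSemiring K] [Semiring A] [HopfAlgebra K A]

/-- The identity map as a unit of the convolution algebra of a Hopf algebra; its inverse is the
antipode. -/
noncomputable def convIdUnit : (WithConv (A →ₗ[K] A))ˣ where
  val := toConv LinearMap.id
  inv := toConv (HopfAlgebra.antipode K)
  val_inv := LinearMap.id_mul_antipode
  inv_val := LinearMap.antipode_mul_id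

theorem range_antipode_mul_range_antipode_le :
    LinearMap.range (HopfAlgebra.antipode K (A := A)) *
      LinearMap.range (HopfAlgebra.antipode K (A := A)) ≤
        LinearMap.range (HopfAlgebra.antipode K (A := A)) := by
  rw [Submodule.mul_le]
  rintro _ ⟨a, rfl⟩ _ ⟨b, rfl⟩
  exact ⟨b * a, HopfAlgebra.antipode_mul_antidistrib b a⟩

end HopfAlgebra

variable {k H} in
theorem isSimpleSubcoalgebra_of_minimal {V : Submodule k H}
    (hV : Minimal (fun W => IsComulClosed W ∧ W ≠ ⊥) V) : IsSimpleSubcoalgebra k H V :=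
  ⟨hV.prop.1, hV.prop.2, fun _ hW hWV =>
    or_iff_not_imp_left.2 fun hW₀ => hWV.antisymm (hV.le_of_le ⟨hW, hW₀⟩ hWV)⟩

/-- if the image of the antipode `S` of a Hopf algebra `H` contains every simple
subcoalgebra of `H` (i.e. `S(H)` contains the coradical `H₀`), then `S` is surjective. -/
theorem antipode_surjective_of_coradical_le_range
    (h : ∀ V : Submodule k H, IsSimpleSubcoalgebra k H V →
      V ≤ LinearMap.range (HopfAlgebra.antipode (R := k) (A := H))) :
    Function.Surjective (HopfAlgebra.antipode (R := k) (A := H)) := by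
  exact LinearMap.range_eq_top.1 <| top_le_iff.1 fun x _ =>
    antipode_surjective_of_coradical_le_range_general (range_antipode_mul_range_antipode_le k H)
      (convIdUnit k H) le_rfl (fun V hV => h V (isSimpleSubcoalgebra_of_minimal hV)) ⟨x, rfl⟩
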